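/- Let n, q be natural numbers, let λ ≥ 0, and let g : ℝ^n → ℝ^q be a λ-Lipschitz map such that the preimage under g of every bounded subset of ℝ^q is bounded. Then for every ε > 0 there exists an infinitely differentiable map g' : ℝ^n → ℝ^q such that: (1) g' is (λ + ε)-Lipschitz; (2) ‖g'(x) − g(x)‖ ≤ ε for all x ∈ ℝ^n; (3) the preimage under g' of every bounded subset of ℝ^q is bounded; and (4) the origin 0 ∈ ℝ^q is a regular value of g', i.e. for every x with g'(x) = 0 the total derivative of g' at x is a surjective linear map ℝ^n → ℝ^q. -/

import Mathlib

/-!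
Mollify `g` to a smooth map `h`, and let `ψ x = x / √(1 + ‖x‖²)`, a bounded Lipschitz
diffeomorphism onto the unit ball. The perturbations `h + A ∘ ψ - c` with `A` linear and small
and `c` small stay uniformly close to `g`, so they remain proper, and their Lipschitz constants
barely grow. For a generic pair `(A, c)` the origin is a regular value, and this needs no Sard
theorem: if the derivative `B` of `h + A ∘ ψ` at `x` is not onto, then `x` and `B` determine `A`,
hence also `c`. If `n = dim E` and `q = dim F`, the maps `B : E → F` that are not onto form a set
of dimension at most `(q - 1) (n + 1)`, so the bad pairs have dimension at most
`n + (q - 1) (n + 1) = q n + q - 1`, one less than the space of all pairs.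
-/

open MeasureTheory Module Set
open scoped ContDiff Convolution NNReal Topology

/-- `y` is a regular value of `f`: the derivative of `f` is onto at every point of the fibre over
`y`. Meant for differentiable `f`, as `fderiv` is zero where `f` is not differentiable. -/
def IsRegularValue {E F : Type*} [NormedAddCommGroup E] [NormedSpace ℝ E] [NormedAddCommGroup F]
    [NormedSpace ℝ F] (f : E → F) (y : F) : Prop :=
  ∀ x, f x = y → Function.Surjective (fderiv ℝ f x)

theorem IsRegularValue.sub_const {E F : Type*} [NormedAddCommGroup E] [NormedSpace ℝ E]
    [NormedAddCommGroup F] [NormedSpace ℝ F] {f : E → F} {y : F} (hf : IsRegularValue f y) :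
    IsRegularValue (fun x => f x - y) 0 := fun x hx => by
  simpa only [fderiv_sub_const] using hf x (sub_eq_zero.1 hx)

theorem isBounded_preimage_of_dist_le {X Y : Type*} [Bornology X] [PseudoMetricSpace Y]
    {f g : X → Y} {ε : ℝ} (hfg : ∀ x, dist (f x) (g x) ≤ ε)
    (hg : ∀ s, Bornology.IsBounded s → Bornology.IsBounded (g ⁻¹' s)) {s : Set Y}
    (hs : Bornology.IsBounded s) : Bornology.IsBounded (f ⁻¹' s) :=
  (hg _ hs.cthickening).subset fun x hx =>
    Metric.mem_cthickening_of_dist_le _ _ ε s hx (dist_comm (f x) (g x) ▸ hfg x)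

section Mollification

variable {E F : Type*} [NormedAddCommGroup E] [NormedSpace ℝ E] [FiniteDimensional ℝ E]
  [NormedAddCommGroup F] [NormedSpace ℝ F] {g : E → F} {K : ℝ≥0}

theorem lipschitzWith_normed_convolution [MeasurableSpace E] [BorelSpace E] {μ : Measure E}
    [μ.IsAddHaarMeasure] (φ : ContDiffBump (0 : E)) (hg : LipschitzWith K g) :
    LipschitzWith K (φ.normed μ ⋆[ContinuousLinearMap.lsmul ℝ ℝ, μ] g) := by
  have hint := φ.hasCompactSupport_normed (μ := μ)
    |>.convolutionExists_left_of_continuous_right (μ := μ) (ContinuousLinearMap.lsmul ℝ ℝ)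
      (φ.continuous_normed (μ := μ)).locallyIntegrable hg.continuous
  refine LipschitzWith.of_dist_le_mul fun x y => ?_
  have hpoint (t : E) : ‖φ.normed μ t • g (x - t) - φ.normed μ t • g (y - t)‖
      ≤ φ.normed μ t * (K * dist x y) := by
    rw [← smul_sub, norm_smul, Real.norm_of_nonneg (φ.nonneg_normed t), ← dist_eq_norm]
    gcongr
    · exact φ.nonneg_normed t
    · simpa only [dist_sub_right] using hg.dist_le_mul (x - t) (y - t)
  rw [dist_eq_norm, convolution_def, convolution_def, ← integral_sub (hint x) (hint y)]
  calc _ ≤ ∫ t, φ.normed μ t * (K * dist x y) ∂μ :=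
        norm_integral_le_of_norm_le (φ.integrable_normed.mul_const _) (.of_forall hpoint)
    _ = K * dist x y := by rw [integral_mul_const, φ.integral_normed, one_mul]

theorem exists_contDiff_lipschitzWith_dist_le [CompleteSpace F] (hg : LipschitzWith K g) {δ : ℝ}
    (hδ : 0 < δ) :
    ∃ h : E → F, ContDiff ℝ ∞ h ∧ LipschitzWith K h ∧ ∀ x, dist (h x) (g x) ≤ δ := by
  borelize E
  let μ : Measure E := Measure.addHaar
  let φ : ContDiffBump (0 : E) :=
    ⟨δ / (K + 1) / 2, δ / (K + 1), by positivity, half_lt_self (by positivity)⟩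
  refine ⟨φ.normed μ ⋆[ContinuousLinearMap.lsmul ℝ ℝ, μ] g,
    φ.hasCompactSupport_normed.contDiff_convolution_left _ φ.contDiff_normed
      hg.continuous.locallyIntegrable, lipschitzWith_normed_convolution φ hg, fun x => ?_⟩
  refine φ.dist_normed_convolution_le hg.continuous.aestronglyMeasurable fun y hy => ?_
  calc dist (g y) (g x) ≤ K * dist y x := hg.dist_le_mul y x
    _ ≤ (K + 1) * (δ / (K + 1)) := by
        gcongr
        · exact le_add_of_nonneg_right zero_le_one
        · exact (Metric.mem_ball.1 hy).le
    _ = δ := by field_simp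

end Mollification

section BoundedImmersion

open OpenPartialHomeomorph (univUnitBall)

theorem norm_univUnitBall_lt_one {E : Type*} [SeminormedAddCommGroup E] [NormedSpace ℝ E] (x : E) :
    ‖univUnitBall x‖ < 1 :=
  mem_ball_zero_iff.1 (univUnitBall.map_source (mem_univ x))

theorem abs_sqrt_one_add_sq_sub_le (a b : ℝ) : |√(1 + a ^ 2) - √(1 + b ^ 2)| ≤ |a - b| := by
  have h := abs_norm_sub_norm_le (1 + a * Complex.I) (1 + b * Complex.I)
  rw [add_sub_add_left_eq_sub, ← sub_mul, norm_mul, Complex.norm_I, mul_one,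
    ← Complex.ofReal_sub, Complex.norm_real, Real.norm_eq_abs, ← Complex.ofReal_one,
    Complex.norm_add_mul_I, Complex.norm_add_mul_I, one_pow] at h
  exact h

theorem lipschitzWith_univUnitBall {E : Type*} [SeminormedAddCommGroup E] [NormedSpace ℝ E] :
    LipschitzWith 2 (univUnitBall : E → E) := by
  refine LipschitzWith.of_dist_le_mul fun x y => ?_
  let a := √(1 + ‖x‖ ^ 2)
  let b := √(1 + ‖y‖ ^ 2)
  have ha : 1 ≤ a := Real.one_le_sqrt.2 (le_add_of_nonneg_right (sq_nonneg _))
  have hyb : ‖b⁻¹ • y‖ ≤ 1 := (norm_univUnitBall_lt_one y).le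
  have hb : 0 < b := Real.sqrt_pos.2 (by positivity)
  have hba : |b - a| ≤ ‖x - y‖ :=
    (abs_sqrt_one_add_sq_sub_le _ _).trans (abs_sub_comm ‖x‖ ‖y‖ ▸ abs_norm_sub_norm_le x y)
  have hsplit : a⁻¹ • x - b⁻¹ • y = a⁻¹ • ((x - y) + (b - a) • b⁻¹ • y) := by
    match_scalars <;> field_simp
    ring
  calc dist (univUnitBall x) (univUnitBall y) = ‖a⁻¹ • x - b⁻¹ • y‖ := dist_eq_norm _ _
    _ = a⁻¹ * ‖(x - y) + (b - a) • b⁻¹ • y‖ := by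
        rw [hsplit, norm_smul, Real.norm_of_nonneg (by positivity)]
    _ ≤ 1 * (‖x - y‖ + |b - a| * 1) := by
        grw [inv_le_one_of_one_le₀ ha, norm_add_le, norm_smul, hyb, Real.norm_eq_abs]
    _ ≤ 2 * dist x y := by rw [dist_eq_norm]; linarith

theorem isInvertible_fderiv_univUnitBall {E : Type*} [NormedAddCommGroup E]
    [InnerProductSpace ℝ E] (x : E) : (fderiv ℝ (univUnitBall : E → E) x).IsInvertible := by
  have hball : Metric.ball (0 : E) 1 ∈ 𝓝 (univUnitBall x) :=
    Metric.isOpen_ball.mem_nhds (univUnitBall.map_source (mem_univ x))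
  have hψ (y : E) : HasFDerivAt univUnitBall (fderiv ℝ univUnitBall y) y :=
    (OpenPartialHomeomorph.contDiff_univUnitBall.differentiable one_ne_zero y).hasFDerivAt
  have hsymm : HasFDerivAt univUnitBall.symm (fderiv ℝ univUnitBall.symm (univUnitBall x))
      (univUnitBall x) :=
    ((OpenPartialHomeomorph.contDiffOn_univUnitBall_symm.contDiffAt hball).differentiableAt
      one_ne_zero).hasFDerivAt
  refine ContinuousLinearMap.IsInvertible.of_inverse
    (g := fderiv ℝ univUnitBall.symm (univUnitBall x)) ?_ ?_
  · have hψx : HasFDerivAt univUnitBall (fderiv ℝ univUnitBall x)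
        (univUnitBall.symm (univUnitBall x)) := by
      rw [univUnitBall.left_inv (mem_univ x)]
      exact hψ x
    refine (hψx.comp (univUnitBall x) hsymm).unique
      ((hasFDerivAt_id _).congr_of_eventuallyEq ?_)
    filter_upwards [hball] with y hy using univUnitBall.right_inv hy
  · exact (hsymm.comp x (hψ x)).unique
      ((hasFDerivAt_id x).congr_of_eventuallyEq (.of_forall fun y =>
        univUnitBall.left_inv (mem_univ y)))

theorem exists_contDiff_bounded_lipschitzWith_isInvertible_fderiv (E : Type*)
    [NormedAddCommGroup E] [NormedSpace ℝ E] [FiniteDimensional ℝ E] :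
    ∃ (ψ : E → E) (K M : ℝ≥0), ContDiff ℝ ∞ ψ ∧ LipschitzWith K ψ ∧ (∀ x, ‖ψ x‖ ≤ M) ∧
      ∀ x, (fderiv ℝ ψ x).IsInvertible := by
  let e := toEuclidean (E := E)
  refine ⟨e.symm ∘ univUnitBall ∘ e, _, ‖e.symm.toContinuousLinearMap‖₊,
    e.symm.contDiff.comp (OpenPartialHomeomorph.contDiff_univUnitBall.comp e.contDiff),
    e.symm.lipschitz.comp (lipschitzWith_univUnitBall.comp e.lipschitz), fun x => ?_, fun x => ?_⟩
  · exact e.symm.toContinuousLinearMap.le_of_opNorm_le_of_le le_rfl (norm_univUnitBall_lt_one _).le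
      |>.trans_eq (mul_one _)
  · rw [e.symm.comp_fderiv, e.comp_right_fderiv]
    exact ContinuousLinearMap.isInvertible_equiv.comp
      ((isInvertible_fderiv_univUnitBall _).comp ContinuousLinearMap.isInvertible_equiv)

end BoundedImmersion

section Transversality

theorem finrank_prod_pi_ne_lt {E F ι : Type*} [NormedAddCommGroup E] [NormedSpace ℝ E]
    [FiniteDimensional ℝ E] [NormedAddCommGroup F] [NormedSpace ℝ F] [Finite ι] (b : Basis ι ℝ F)
    (i : ι) :
    finrank ℝ (E × ({j // j ≠ i} → StrongDual ℝ E × ℝ)) < finrank ℝ ((E →L[ℝ] F) × F) := by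
  classical
  have := Fintype.ofFinite ι
  have := b.finiteDimensional_of_finite
  have hdual : finrank ℝ (StrongDual ℝ E) = finrank ℝ E :=
    (LinearMap.toContinuousLinearMap (F' := ℝ)).finrank_eq.symm.trans
      (Subspace.dual_finrank_eq)
  have hclm : finrank ℝ (E →L[ℝ] F) = finrank ℝ E * finrank ℝ F :=
    LinearMap.toContinuousLinearMap.finrank_eq.symm.trans (finrank_linearMap ..)
  have hcard : Fintype.card {j // j ≠ i} + 1 = finrank ℝ F := by
    rw [finrank_eq_card_basis b, Fintype.card_subtype_compl, Fintype.card_subtype_eq]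
    exact Nat.sub_add_cancel (Fintype.card_pos_iff.2 ⟨i⟩)
  rw [finrank_prod, finrank_prod, finrank_pi_fintype, hclm, ← hcard]
  simp only [finrank_prod, hdual, finrank_self, Finset.sum_const, Finset.card_univ, smul_eq_mul]
  linarith

variable {E F ι : Type*} [NormedAddCommGroup E] [NormedSpace ℝ E] [NormedAddCommGroup F]
  [NormedSpace ℝ F] [Fintype ι] [DecidableEq ι]

/-- The linear maps whose range lies in a hyperplane that is a graph over the span of the `b j`,
`j ≠ i`. The hyperplane is given by the slopes `(p j).2` and the map by its coordinates `(p j).1`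
in the basis `b j + (p j).2 • b i` of the hyperplane. -/
noncomputable def hyperplaneMap (b : Basis ι ℝ F) (i : ι)
    (p : {j // j ≠ i} → StrongDual ℝ E × ℝ) : E →L[ℝ] F :=
  ∑ j, (p j).1.smulRight (b j + (p j).2 • b i)

theorem contDiff_hyperplaneMap (b : Basis ι ℝ F) (i : ι) {n : ℕ∞ω} :
    ContDiff ℝ n (hyperplaneMap (E := E) b i) := by
  unfold hyperplaneMap
  fun_prop

theorem exists_hyperplaneMap_eq_of_not_surjective (b : Basis ι ℝ F) {B : E →L[ℝ] F}
    (hB : ¬ Function.Surjective B) : ∃ i p, hyperplaneMap b i p = B := by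
  have := b.finiteDimensional_of_finite
  obtain ⟨l, hl, hBl⟩ := (LinearMap.range B.toLinearMap).exists_le_ker_of_lt_top
    (lt_top_iff_ne_top.2 (mt LinearMap.range_eq_top.1 hB))
  obtain ⟨i, hi⟩ : ∃ i, l (b i) ≠ 0 := by
    by_contra! h
    exact hl (b.ext h)
  let t (j : ι) : ℝ := -(l (b j) / l (b i))
  refine ⟨i, fun j => (LinearMap.toContinuousLinearMap (b.coord j) ∘L B, t j), ?_⟩
  ext y
  let r := b.repr (B y)
  have hker : r i * l (b i) + ∑ j : {j // j ≠ i}, r j * l (b j) = 0 := by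
    rw [← Fintype.sum_eq_add_sum_subtype_ne (fun j => r j * l (b j))]
    have hly : l (∑ j, r j • b j) = 0 := by
      rw [b.sum_repr]
      exact hBl ⟨y, rfl⟩
    simpa only [map_sum, map_smul, smul_eq_mul] using hly
  have hri : ∑ j : {j // j ≠ i}, r j * t j = r i := by
    simp only [t, mul_neg, ← mul_div_assoc, Finset.sum_neg_distrib, ← Finset.sum_div]
    field_simp
    linarith
  calc hyperplaneMap b i _ y = ∑ j : {j // j ≠ i}, r j • (b j + t j • b i) := by
        simp [hyperplaneMap, r]
    _ = r i • b i + ∑ j : {j // j ≠ i}, r j • b j := by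
        simp only [smul_add, smul_smul, Finset.sum_add_distrib, ← Finset.sum_smul, hri, add_comm]
    _ = B y := by
        rw [← Fintype.sum_eq_add_sum_subtype_ne (fun j => r j • b j), b.sum_repr]

/-- With `A` solved from `fderiv ℝ f x + A ∘L fderiv ℝ ψ x = hyperplaneMap b i p`, the pair of `A`
and the value at `x` of `f + A ∘ ψ`: as `x` and `p` vary, these are the pairs `(A, c)` for which
`c` is a critical value of `f + A ∘ ψ`. -/
noncomputable def criticalParam (f : E → F) (ψ : E → E) (b : Basis ι ℝ F) (i : ι)
    (z : E × ({j // j ≠ i} → StrongDual ℝ E × ℝ)) : (E →L[ℝ] F) × F :=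
  let A := (hyperplaneMap b i z.2 - fderiv ℝ f z.1) ∘L (fderiv ℝ ψ z.1).inverse
  (A, f z.1 + A (ψ z.1))

variable {f : E → F} {ψ : E → E}

theorem contDiff_criticalParam [CompleteSpace E] (hf : ContDiff ℝ 2 f) (hψ : ContDiff ℝ 2 ψ)
    (hψ' : ∀ x, (fderiv ℝ ψ x).IsInvertible) (b : Basis ι ℝ F) (i : ι) :
    ContDiff ℝ 1 (criticalParam f ψ b i) := by
  have hf' : ContDiff ℝ 1 (fderiv ℝ f) := hf.fderiv_right (by norm_num)
  have hψinv : ContDiff ℝ 1 fun x => (fderiv ℝ ψ x).inverse :=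
    contDiff_iff_contDiffAt.2 fun x => (hψ' x).contDiffAt_map_inverse.comp x
      (hψ.fderiv_right (by norm_num)).contDiffAt
  have hA : ContDiff ℝ 1 fun z : E × ({j // j ≠ i} → StrongDual ℝ E × ℝ) =>
      (hyperplaneMap b i z.2 - fderiv ℝ f z.1) ∘L (fderiv ℝ ψ z.1).inverse :=
    (((contDiff_hyperplaneMap b i).comp contDiff_snd).sub (hf'.comp contDiff_fst)).clm_comp
      (hψinv.comp contDiff_fst)
  exact hA.prodMk (((hf.of_le (by norm_num)).comp contDiff_fst).add
    (hA.clm_apply ((hψ.of_le (by norm_num)).comp contDiff_fst)))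

theorem exists_criticalParam_eq_of_not_isRegularValue (hf : Differentiable ℝ f)
    (hψ : Differentiable ℝ ψ) (hψ' : ∀ x, (fderiv ℝ ψ x).IsInvertible) (b : Basis ι ℝ F)
    {A : E →L[ℝ] F} {c : F} (hc : ¬ IsRegularValue (fun x => f x + A (ψ x)) c) :
    ∃ i z, criticalParam f ψ b i z = (A, c) := by
  obtain ⟨x, hx, hns⟩ : ∃ x, f x + A (ψ x) = c ∧
      ¬ Function.Surjective (fderiv ℝ (fun x => f x + A (ψ x)) x) := by
    simpa only [IsRegularValue, not_forall, exists_prop] using hc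
  have hderiv : fderiv ℝ (fun x => f x + A (ψ x)) x = fderiv ℝ f x + A ∘L fderiv ℝ ψ x :=
    ((hf x).hasFDerivAt.add (A.hasFDerivAt.comp x (hψ x).hasFDerivAt)).fderiv
  obtain ⟨i, p, hp⟩ := exists_hyperplaneMap_eq_of_not_surjective b (hderiv ▸ hns)
  have hA : (hyperplaneMap b i p - fderiv ℝ f x) ∘L (fderiv ℝ ψ x).inverse = A := by
    rw [hp, add_sub_cancel_left, ContinuousLinearMap.comp_assoc, (hψ' x).self_comp_inverse,
      ContinuousLinearMap.comp_id]
  exact ⟨i, (x, p), by simp only [criticalParam, hA, hx]⟩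

theorem dense_setOf_isRegularValue_add_clm [FiniteDimensional ℝ E] [FiniteDimensional ℝ F]
    (hf : ContDiff ℝ 2 f) (hψ : ContDiff ℝ 2 ψ) (hψ' : ∀ x, (fderiv ℝ ψ x).IsInvertible) :
    Dense {p : (E →L[ℝ] F) × F | IsRegularValue (fun x => f x + p.1 (ψ x)) p.2} := by
  let b := finBasis ℝ F
  have hcover : (⋃ i, range (criticalParam f ψ b i))ᶜ ⊆
      {p : (E →L[ℝ] F) × F | IsRegularValue (fun x => f x + p.1 (ψ x)) p.2} := by
    refine compl_subset_comm.1 fun p hp => ?_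
    exact mem_iUnion.2 (exists_criticalParam_eq_of_not_isRegularValue
      (hf.differentiable two_ne_zero) (hψ.differentiable two_ne_zero) hψ' b hp)
  refine Dense.mono hcover ?_
  cases isEmpty_or_nonempty (Fin (finrank ℝ F)) with
  | inl _ => simp only [iUnion_of_empty, compl_empty, dense_univ]
  | inr _ =>
    refine dense_compl_of_dimH_lt_finrank ?_
    obtain ⟨i, hi⟩ := exists_eq_ciSup_of_finite (f := fun i => dimH (range (criticalParam f ψ b i)))
    rw [dimH_iUnion, ← hi]
    exact (contDiff_criticalParam hf hψ hψ' b i).dimH_range_le.trans_lt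
      (Nat.cast_lt.2 (finrank_prod_pi_ne_lt b i))

theorem exists_contDiff_lipschitzWith_norm_le_isRegularValue_add [FiniteDimensional ℝ E]
    [FiniteDimensional ℝ F] (hf : ContDiff ℝ 2 f) {δ : ℝ≥0} (hδ : 0 < δ) :
    ∃ u : E → F, ContDiff ℝ ∞ u ∧ LipschitzWith δ u ∧ (∀ x, ‖u x‖ ≤ δ) ∧
      IsRegularValue (fun x => f x + u x) 0 := by
  obtain ⟨ψ, L, M, hψ, hψL, hψM, hψ'⟩ :=
    exists_contDiff_bounded_lipschitzWith_isInvertible_fderiv E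
  let η : ℝ≥0 := δ / (1 + L + M)
  have hη : η * (1 + L + M) = δ := div_mul_cancel₀ _ (by positivity)
  obtain ⟨⟨A, c⟩, hreg, hAc⟩ := (dense_setOf_isRegularValue_add_clm hf
    (contDiff_infty.1 hψ 2) hψ').exists_dist_lt 0 (show (0 : ℝ) < η by positivity)
  rw [dist_zero_left] at hAc
  have hA : ‖A‖₊ ≤ η := (norm_fst_le (A, c)).trans hAc.le
  have hc : ‖c‖₊ ≤ η := (norm_snd_le (A, c)).trans hAc.le
  refine ⟨fun x => A (ψ x) - c, (A.contDiff.comp hψ).sub contDiff_const,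
    ((A.lipschitz.comp hψL).sub (LipschitzWith.const c)).weaken ?_, fun x => ?_,
    by simpa only [add_sub_assoc] using hreg.sub_const⟩
  · calc ‖A‖₊ * L + 0 ≤ η * L := by grw [hA, add_zero]
      _ ≤ η * (1 + L + M) := by
          gcongr
          exact le_add_self.trans le_self_add
      _ = δ := hη
  · have hbound : ‖A (ψ x) - c‖₊ ≤ δ := calc
      _ ≤ ‖A (ψ x)‖₊ + ‖c‖₊ := nnnorm_sub_le _ _
      _ ≤ η * M + η := add_le_add (A.le_of_opNorm_le_of_le hA (hψM x)) hc
      _ ≤ η * M + η + η * L := le_self_add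
      _ = η * (1 + L + M) := by ring
      _ = δ := hη
    exact hbound

end Transversality

theorem smooth_proper_lipschitz_approximation_general {E F : Type*} [NormedAddCommGroup E]
    [NormedSpace ℝ E] [FiniteDimensional ℝ E] [NormedAddCommGroup F] [NormedSpace ℝ F]
    [FiniteDimensional ℝ F] {K ε : ℝ≥0} {g : E → F} (hg : LipschitzWith K g) (hε : 0 < ε) :
    ∃ g' : E → F, ContDiff ℝ ∞ g' ∧ LipschitzWith (K + ε) g' ∧ (∀ x, dist (g' x) (g x) ≤ ε) ∧
      IsRegularValue g' 0 := by
  obtain ⟨h, hh, hhK, hhg⟩ := exists_contDiff_lipschitzWith_dist_le hg (δ := ε / 2) (by positivity)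
  obtain ⟨u, hu, huL, hu_le, hreg⟩ :=
    exists_contDiff_lipschitzWith_norm_le_isRegularValue_add (contDiff_infty.1 hh 2) (half_pos hε)
  refine ⟨fun x => h x + u x, hh.add hu,
    (hhK.add huL).weaken (add_le_add_right (half_le_self ε.2) K), fun x => ?_, hreg⟩
  calc dist (h x + u x) (g x) ≤ dist (h x + u x) (h x) + dist (h x) (g x) := dist_triangle _ _ _
    _ ≤ ε / 2 + ε / 2 := add_le_add ((dist_self_add_left _ _).trans_le (hu_le x)) (hhg x)
    _ = ε := add_halves _

/-- A proper `λ`-Lipschitz map `g : ℝ^n → ℝ^q` can be approximated, for every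
`ε > 0`, by a smooth `(λ + ε)`-Lipschitz map `g'` at uniform distance `≤ ε` from `g`, which
is still proper (preimages of bounded sets are bounded), and for which `0 ∈ ℝ^q` is a
regular value. -/
theorem smooth_proper_lipschitz_approximation (n q : ℕ) (lam : ℝ) (hlam : 0 ≤ lam)
    (g : EuclideanSpace ℝ (Fin n) → EuclideanSpace ℝ (Fin q))
    (hg_lip : ∀ x y, ‖g x - g y‖ ≤ lam * ‖x - y‖)
    (hg_prop : ∀ s : Set (EuclideanSpace ℝ (Fin q)),
      Bornology.IsBounded s → Bornology.IsBounded (g ⁻¹' s)) :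
    ∀ ε : ℝ, 0 < ε →
      ∃ g' : EuclideanSpace ℝ (Fin n) → EuclideanSpace ℝ (Fin q),
        ContDiff ℝ (⊤ : ℕ∞) g' ∧
        (∀ x y, ‖g' x - g' y‖ ≤ (lam + ε) * ‖x - y‖) ∧
        (∀ x, ‖g' x - g x‖ ≤ ε) ∧
        (∀ s : Set (EuclideanSpace ℝ (Fin q)),
          Bornology.IsBounded s → Bornology.IsBounded (g' ⁻¹' s)) ∧
        (∀ x, g' x = 0 → Function.Surjective (fderiv ℝ g' x)) := by
  intro ε hε
  lift lam to ℝ≥0 using hlam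
  lift ε to ℝ≥0 using hε.le
  have hg : LipschitzWith lam g :=
    .of_dist_le_mul fun x y => by simpa only [dist_eq_norm] using hg_lip x y
  obtain ⟨g', hsmooth, hlip, hdist, hreg⟩ :=
    smooth_proper_lipschitz_approximation_general hg (NNReal.coe_pos.1 hε)
  refine ⟨g', hsmooth, fun x y => ?_, fun x => ?_,
    fun s hs => isBounded_preimage_of_dist_le hdist hg_prop hs, hreg⟩
  · simpa only [dist_eq_norm] using NNReal.coe_add lam ε ▸ hlip.dist_le_mul x y
  · simpa only [dist_eq_norm] using hdist x
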